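/- (Proposition 4.) The function S : ℝ → ℝ defined by S(t₂) = g₁·(μ·Φ((μ−t₂)/σ₂) + (μ·F₁ + σ₁·f₁)·(1 − Φ((μ−t₂)/σ₂))) + g₂·(μ·F₁ + (μ·Φ((μ−t₂)/σ₂) + σ₂·φ((μ−t₂)/σ₂))·(1 − F₁)) attains a strict global maximum at the unique point t₂⁰ = −(g₁/g₂)·(μ − σ₁·f₁/(1 − F₁)); that is, S(t₂) < S(t₂⁰) for all t₂ ≠ t₂⁰. -/

import Mathlib

open Real

/-- Density of the standard normal distribution. -/
noncomputable def stdPdf (y : ℝ) : ℝ := (Real.sqrt (2 * Real.pi))⁻¹ * Real.exp (-(y ^ 2) / 2)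

/-- Cumulative distribution function of the standard normal distribution. -/
noncomputable def stdCdf (y : ℝ) : ℝ := ∫ x in Set.Iic y, stdPdf x

theorem stdPdf_eq_aux : stdPdf = ProbabilityTheory.gaussianPDFReal 0 1 := by
  funext x
  simp [stdPdf, ProbabilityTheory.gaussianPDFReal]

theorem stdPdf_pos_aux (y : ℝ) : 0 < stdPdf y := by
  unfold stdPdf; positivity

theorem stdPdf_cont_aux : Continuous stdPdf := by
  unfold stdPdf; fun_prop

theorem stdPdf_int_aux : MeasureTheory.Integrable stdPdf := by
  rw [stdPdf_eq_aux]; exact ProbabilityTheory.integrable_gaussianPDFReal 0 1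

theorem stdCdf_le_aux (y : ℝ) : stdCdf y ≤ 1 := by
  have h : ∫ x, stdPdf x = 1 := by
    rw [stdPdf_eq_aux]; exact ProbabilityTheory.integral_gaussianPDFReal_eq_one 0 one_ne_zero
  rw [← h]
  exact MeasureTheory.setIntegral_le_integral stdPdf_int_aux
    (Filter.Eventually.of_forall fun x => (stdPdf_pos_aux x).le)

theorem stdCdf_deriv_aux (y : ℝ) : HasDerivAt stdCdf (stdPdf y) y := by
  have h : stdCdf = fun y => stdCdf 0 + ∫ x in (0:ℝ)..y, stdPdf x := by
    funext z
    have := intervalIntegral.integral_Iic_sub_Iic (f := stdPdf) (a := 0) (b := z)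
      stdPdf_int_aux.integrableOn stdPdf_int_aux.integrableOn
    rw [← this]; unfold stdCdf; ring
  rw [h]
  exact (intervalIntegral.integral_hasDerivAt_right (stdPdf_cont_aux.intervalIntegrable _ _)
    (stdPdf_cont_aux.stronglyMeasurableAtFilter _ _) stdPdf_cont_aux.continuousAt).const_add _

theorem stdPdf_deriv_aux (y : ℝ) : HasDerivAt stdPdf (-y * stdPdf y) y := by
  have h1 : HasDerivAt (fun y : ℝ => -(y ^ 2) / 2) (-y) y := by
    have := ((hasDerivAt_pow 2 y).neg).div_const 2
    exact this.congr_deriv (by norm_num; ring)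
  have := h1.exp.const_mul (Real.sqrt (2 * Real.pi))⁻¹
  exact this.congr_deriv (by unfold stdPdf; ring)

theorem stdCdf_lt_aux (y : ℝ) : stdCdf y < 1 := by
  have h : StrictMono stdCdf := strictMono_of_deriv_pos fun x => by
    rw [(stdCdf_deriv_aux x).deriv]; exact stdPdf_pos_aux x
  exact (h (lt_add_one y)).trans_le (stdCdf_le_aux _)

theorem max_aux (a y : ℝ) (hy : y ≠ a) :
    a * stdCdf y + stdPdf y < a * stdCdf a + stdPdf a := by
  have hd : ∀ x, HasDerivAt (fun y => a * stdCdf y + stdPdf y) ((a - x) * stdPdf x) x := by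
    intro x
    exact (((stdCdf_deriv_aux x).const_mul a).add (stdPdf_deriv_aux x)).congr_deriv (by ring)
  have hc : Continuous (fun y => a * stdCdf y + stdPdf y) :=
    continuous_iff_continuousAt.2 fun x => (hd x).continuousAt
  rcases lt_or_gt_of_ne hy with h | h
  · have := strictMonoOn_of_deriv_pos (convex_Iic a) hc.continuousOn (fun x hx => by
      rw [interior_Iic] at hx
      rw [(hd x).deriv]
      exact mul_pos (sub_pos.2 hx) (stdPdf_pos_aux x))
    exact this (Set.mem_Iic.2 h.le) (Set.mem_Iic.2 le_rfl) h
  · have := strictAntiOn_of_deriv_neg (convex_Ici a) hc.continuousOn (fun x hx => by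
      rw [interior_Ici] at hx
      rw [(hd x).deriv]
      exact mul_neg_of_neg_of_pos (sub_neg.2 hx) (stdPdf_pos_aux x))
    exact this (Set.mem_Ici.2 le_rfl) (Set.mem_Ici.2 h.le) h

/-- Proposition 4: under the unanimous rejection group rule, the expected capital increment
of the whole society `S(t₂) = g₁·(μ·Φ((μ−t₂)/σ₂) + (μ·F₁ + σ₁·f₁)·(1 − Φ((μ−t₂)/σ₂))) +
g₂·(μ·F₁ + (μ·Φ((μ−t₂)/σ₂) + σ₂·φ((μ−t₂)/σ₂))·(1 − F₁))` attains a strict global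
maximum at the unique point `t₂⁰ = −(g₁/g₂)·(μ − σ₁·f₁/(1 − F₁))`. -/
theorem society_max_unanimous_rejection
    (μ σ : ℝ) (hσ : 0 < σ) (g₁ g₂ : ℕ) (hg₁ : 1 ≤ g₁) (hg₂ : 1 ≤ g₂) (t₁ : ℝ)
    (σ₁ σ₂ : ℝ) (hσ₁ : σ₁ = σ / Real.sqrt g₁) (hσ₂ : σ₂ = σ / Real.sqrt g₂)
    (F₁ f₁ : ℝ) (hF₁ : F₁ = stdCdf ((μ - t₁) / σ₁)) (hf₁ : f₁ = stdPdf ((μ - t₁) / σ₁))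
    (S : ℝ → ℝ)
    (hS : S = fun t₂ => (g₁ : ℝ) * (μ * stdCdf ((μ - t₂) / σ₂) +
        (μ * F₁ + σ₁ * f₁) * (1 - stdCdf ((μ - t₂) / σ₂))) +
      (g₂ : ℝ) * (μ * F₁ + (μ * stdCdf ((μ - t₂) / σ₂) + σ₂ * stdPdf ((μ - t₂) / σ₂)) *
        (1 - F₁))) :
    ∀ t₂ : ℝ, t₂ ≠ -((g₁ : ℝ) / g₂) * (μ - σ₁ * f₁ / (1 - F₁)) →
      S t₂ < S (-((g₁ : ℝ) / g₂) * (μ - σ₁ * f₁ / (1 - F₁))) := by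
  intro t₂ ht
  have hg : (0:ℝ) < g₂ := by exact_mod_cast hg₂
  have hs : 0 < σ₂ := by rw [hσ₂]; positivity
  have hF : 0 < 1 - F₁ := by rw [hF₁]; exact sub_pos.2 (stdCdf_lt_aux _)
  set t₀ := -((g₁ : ℝ) / g₂) * (μ - σ₁ * f₁ / (1 - F₁)) with ht₀
  have key : (g₁ : ℝ) * (μ * (1 - F₁) - σ₁ * f₁) = - t₀ * (g₂ * (1 - F₁)) := by
    rw [ht₀]; field_simp
  have hform : ∀ t, S t = (g₁ : ℝ) * (μ * F₁ + σ₁ * f₁) + g₂ * (μ * F₁) +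
      g₂ * (1 - F₁) * σ₂ * ((μ - t₀) / σ₂ * stdCdf ((μ - t) / σ₂) + stdPdf ((μ - t) / σ₂)) := by
    intro t
    have e : g₂ * (1 - F₁) * σ₂ * ((μ - t₀) / σ₂ * stdCdf ((μ - t) / σ₂) + stdPdf ((μ - t) / σ₂))
      = g₂ * (1 - F₁) * ((μ - t₀) * stdCdf ((μ - t) / σ₂) + σ₂ * stdPdf ((μ - t) / σ₂)) := by
      field_simp
    rw [e, hS]
    linear_combination (stdCdf ((μ - t) / σ₂)) * key
  rw [hform, hform]
  have hne : (μ - t₂) / σ₂ ≠ (μ - t₀) / σ₂ := by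
    intro h
    rw [div_left_inj' hs.ne'] at h
    exact ht (by linarith)
  have := mul_lt_mul_of_pos_left (max_aux _ _ hne) (show 0 < g₂ * (1 - F₁) * σ₂ by positivity)
  linarith
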